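/- Let 0 < p < 1, q = 1 − p, n ≥ 1 an integer, 0 ≤ k ≤ n, σ = √(npq), and δ_n(k,p) = C(n,k) p^k q^{n−k} − (1/σ) φ((k − np)/σ), where φ(x) = (1/√(2π)) e^{−x²/2}. Then |δ_n(k,p)| < min{ 1/(σ√(2e)), 0.516/σ² }. -/

import Mathlib

/-- The standard normal density `φ(x) = (1/√(2π)) e^{−x²/2}`. -/
noncomputable def phi (x : ℝ) : ℝ :=
  (Real.sqrt (2 * Real.pi))⁻¹ * Real.exp (-x ^ 2 / 2)

/-!
Two bounds are compared. Uniformly in the variance `v = n p q`, both the binomial mass and the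
Gaussian density lie in `[0, 1/√(2 e v))`; for the mass this is Herzog's inequality. It gives the
first half of the minimum, and also the second half as long as `v ≤ 1.44`.

For larger `v` one has `n ≥ 6`, and both terms are written as Fourier integrals. If `f` is the
characteristic function of a centred Bernoulli variable and `g t = e^{-p q t² / 2}`, then
`f ^ n - g ^ n = (f - g) ∑ g ^ j f ^ (n - 1 - j)`, where `f - g` is `O(p q |t|³)` and
`|f t| ≤ e^{-p q t² / 5}` on `[-π, π]`. Integrating the resulting Gaussian moments gives `O(1 / v)`.
-/

open MeasureTheory Finset
open Complex (I)
open scoped Real Nat Polynomial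

section BinomialMass

/-- The probability that a binomial variable with parameters `n` and `p` equals `k`. -/
noncomputable def binomialMass (p : ℝ) (n k : ℕ) : ℝ :=
  n.choose k * p ^ k * (1 - p) ^ (n - k)

lemma binomialMass_nonneg {p : ℝ} (hp0 : 0 ≤ p) (hp1 : p ≤ 1) (n k : ℕ) :
    0 ≤ binomialMass p n k := by
  have := sub_nonneg.2 hp1
  unfold binomialMass
  positivity

lemma one_div_add_one_le_log_sub_log {x : ℝ} (hx : 0 ≤ x) :
    1 / (x + 1) ≤ Real.log (2 * x + 3) - Real.log (2 * x + 1) := by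
  have h := Real.le_log_one_add_of_nonneg (x := 2 / (2 * x + 1)) (by positivity)
  rwa [show 2 * (2 / (2 * x + 1)) / (2 / (2 * x + 1) + 2) = 1 / (x + 1) by field_simp; ring,
    show 1 + 2 / (2 * x + 1) = (2 * x + 3) / (2 * x + 1) by field_simp; ring,
    Real.log_div (by positivity) (by positivity)] at h

lemma hasDerivAt_mul_log_linear (c : ℝ) {x : ℝ} (hx : 2 * x + c ≠ 0) :
    HasDerivAt (fun y ↦ (2 * y + c) * Real.log (2 * y + c)) ((Real.log (2 * x + c) + 1) * 2) x := by
  have h : HasDerivAt (fun y : ℝ ↦ 2 * y + c) 2 x := by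
    simpa using ((hasDerivAt_id x).const_mul 2).add_const c
  exact (Real.hasDerivAt_mul_log hx).comp x h

lemma monotoneOn_mul_log_sub_mul_log_sub_log :
    MonotoneOn (fun x : ℝ ↦ (2 * x + 3) * Real.log (2 * x + 3)
      - (2 * x + 1) * Real.log (2 * x + 1) - 2 * Real.log (x + 1)) (Set.Ici 0) := by
  have hderiv : ∀ x ∈ Set.Ici (0 : ℝ), HasDerivAt (fun x : ℝ ↦ (2 * x + 3) * Real.log (2 * x + 3)
      - (2 * x + 1) * Real.log (2 * x + 1) - 2 * Real.log (x + 1))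
      ((Real.log (2 * x + 3) + 1) * 2 - (Real.log (2 * x + 1) + 1) * 2 - 2 * (1 / (x + 1))) x := by
    intro x hx
    rw [Set.mem_Ici] at hx
    have hlog := (((hasDerivAt_id x).add_const 1).log (by simp only [id]; positivity)).const_mul 2
    exact ((hasDerivAt_mul_log_linear 3 (by positivity)).sub
      (hasDerivAt_mul_log_linear 1 (by positivity))).sub hlog
  refine monotoneOn_of_hasDerivWithinAt_nonneg (convex_Ici 0)
    (fun x hx ↦ (hderiv x hx).continuousAt.continuousWithinAt)
    (fun x hx ↦ (hderiv x (interior_subset hx)).hasDerivWithinAt) fun x hx ↦ ?_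
  linarith [one_div_add_one_le_log_sub_log (interior_subset hx)]

lemma pow_mul_pow_mul_sq_le {k l : ℕ} (hkl : k ≤ l) :
    (2 * k + 3 : ℝ) ^ (2 * k + 3) * ((2 * l + 1) ^ (2 * l + 1) * (l + 1) ^ 2) ≤
      (2 * l + 3) ^ (2 * l + 3) * ((2 * k + 1) ^ (2 * k + 1) * (k + 1) ^ 2) := by
  have h := monotoneOn_mul_log_sub_mul_log_sub_log (Set.mem_Ici.2 (Nat.cast_nonneg k))
    (Set.mem_Ici.2 (Nat.cast_nonneg l)) (Nat.cast_le.2 hkl)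
  rw [← Real.log_le_log_iff (by positivity) (by positivity)]
  repeat rw [Real.log_mul (by positivity) (by positivity)]
  simp only [Real.log_pow]
  push_cast
  linarith

lemma choose_sq_mul_pow_mul_pow_le (k m : ℕ) :
    ((k + m).choose k : ℝ) ^ 2 * ((2 * k + 1) ^ (2 * k + 1) * (2 * m + 1) ^ (2 * m + 1)) ≤
      (2 * (k + m) + 1) ^ (2 * (k + m) + 1) := by
  induction k with
  | zero => simp
  | succ k ih =>
    have hstep := pow_mul_pow_mul_sq_le (Nat.le_add_right k m)
    have hchoose : ((k + 1 + m).choose (k + 1) : ℝ) * (k + 1) =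
        (k + m + 1) * (k + m).choose k := by
      rw [Nat.add_right_comm]
      exact_mod_cast (Nat.add_one_mul_choose_eq (k + m) k).symm
    push_cast at hstep ⊢
    rw [show 2 * (k + 1) + 1 = 2 * k + 3 by ring,
      show 2 * (k + 1 + m) + 1 = 2 * (k + m) + 3 by ring,
      show 2 * ((k : ℝ) + 1) + 1 = 2 * k + 3 by ring,
      show 2 * ((k : ℝ) + 1 + m) + 1 = 2 * (k + m) + 3 by ring]
    refine le_of_mul_le_mul_right (le_trans ?_ hstep)
      (show (0 : ℝ) < (2 * k + 1) ^ (2 * k + 1) * (k + 1) ^ 2 by positivity)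
    calc ((k + 1 + m).choose (k + 1) : ℝ) ^ 2 *
          ((2 * k + 3) ^ (2 * k + 3) * (2 * m + 1) ^ (2 * m + 1)) *
          ((2 * k + 1) ^ (2 * k + 1) * (k + 1) ^ 2)
        = (((k + 1 + m).choose (k + 1) : ℝ) * (k + 1)) ^ 2 * (2 * k + 3) ^ (2 * k + 3) *
          ((2 * k + 1) ^ (2 * k + 1) * (2 * m + 1) ^ (2 * m + 1)) := by ring
      _ = (2 * k + 3) ^ (2 * k + 3) * ((((k + m).choose k : ℝ) ^ 2 *
          ((2 * k + 1) ^ (2 * k + 1) * (2 * m + 1) ^ (2 * m + 1))) * (k + m + 1) ^ 2) := by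
        rw [hchoose]; ring
      _ ≤ _ := by gcongr

lemma pow_le_exp_mul_sub_one {x : ℝ} (hx : 0 ≤ x) (n : ℕ) : x ^ n ≤ Real.exp (n * (x - 1)) := by
  rw [Real.exp_nat_mul]
  exact pow_le_pow_left₀ hx (by linarith [Real.add_one_le_exp (x - 1)]) n

lemma pow_mul_pow_mul_add_pow_le {p q : ℝ} (hp : 0 ≤ p) (hq : 0 ≤ q) (hpq : p + q = 1) (a b : ℕ) :
    p ^ a * q ^ b * (a + b) ^ (a + b) ≤ (a : ℝ) ^ a * b ^ b := by
  rcases a.eq_zero_or_pos with rfl | ha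
  · simpa using mul_le_of_le_one_left (by positivity) (pow_le_one₀ hq (by linarith))
  rcases b.eq_zero_or_pos with rfl | hb
  · simpa using mul_le_of_le_one_left (by positivity) (pow_le_one₀ hp (by linarith))
  have hexponent : (a : ℝ) * (p * (a + b) / a - 1) + b * (q * (a + b) / b - 1) = 0 := by
    field_simp
    linear_combination ((a : ℝ) + b) * hpq
  have h : (p * (a + b) / a) ^ a * (q * (a + b) / b) ^ b ≤ 1 := by
    rw [← Real.exp_zero, ← hexponent, Real.exp_add]
    gcongr <;> exact pow_le_exp_mul_sub_one (by positivity) _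
  rw [div_pow, div_pow, div_mul_div_comm, div_le_one (by positivity)] at h
  calc p ^ a * q ^ b * (a + b) ^ (a + b)
      = (p * (a + b)) ^ a * (q * ((a : ℝ) + b)) ^ b := by rw [mul_pow, mul_pow, pow_add]; ring
    _ ≤ _ := h

lemma pow_mul_exp_one_le_add_one_pow {x : ℝ} {n : ℕ} (hx : 0 ≤ x) (hn : x + 1 = n) :
    x ^ n * Real.exp 1 ≤ (x + 1) ^ n := by
  have h := Real.one_sub_div_pow_le_exp_neg (n := n) (t := 1) (by linarith)
  rw [← hn, one_sub_div (by positivity), add_sub_cancel_right, div_pow,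
    div_le_iff₀ (by positivity)] at h
  calc x ^ n * Real.exp 1 ≤ Real.exp (-1) * (x + 1) ^ n * Real.exp 1 := by gcongr
    _ = (Real.exp (-1) * Real.exp 1) * (x + 1) ^ n := by ring
    _ = (x + 1) ^ n := by
      rw [← Real.exp_add, neg_add_cancel, Real.exp_zero, one_mul]

/- Herzog's inequality. Squaring turns `p ^ k q ^ m √(p q)` into `p ^ (2 k + 1) q ^ (2 m + 1)`, and
the maximum of the latter over `p` is where the odd powers in the lemmas above come from. -/
lemma binomialMass_sq_mul_lt {p : ℝ} (hp0 : 0 ≤ p) (hp1 : p ≤ 1) (k m : ℕ) :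
    binomialMass p (k + m) k ^ 2 * ((k + m : ℕ) * p * (1 - p)) < 1 / (2 * Real.exp 1) := by
  have hq0 : 0 ≤ 1 - p := sub_nonneg.2 hp1
  have hweights := pow_mul_pow_mul_add_pow_le hp0 hq0 (add_sub_cancel p 1) (2 * k + 1) (2 * m + 1)
  have hchoose := choose_sq_mul_pow_mul_pow_le k m
  push_cast at hweights ⊢
  rw [show (2 * (k : ℝ) + 1 + (2 * m + 1)) = 2 * (k + m) + 1 + 1 by ring,
    show 2 * k + 1 + (2 * m + 1) = 2 * (k + m) + 2 by ring] at hweights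
  set s : ℝ := k + m
  have : 0 ≤ s := by positivity
  have hexp := pow_mul_exp_one_le_add_one_pow (x := 2 * s + 1) (n := 2 * (k + m) + 2)
    (by positivity) (by push_cast; ring)
  rw [binomialMass, Nat.add_sub_cancel_left, lt_div_iff₀ (by positivity)]
  refine lt_of_mul_lt_mul_right ?_
    (show 0 ≤ (2 * s + 1 + 1) ^ (2 * (k + m) + 2) by positivity)
  calc (((k + m).choose k : ℝ) * p ^ k * (1 - p) ^ m) ^ 2 * (s * p * (1 - p)) *
        (2 * Real.exp 1) * (2 * s + 1 + 1) ^ (2 * (k + m) + 2)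
      = ((k + m).choose k : ℝ) ^ 2 * (p ^ (2 * k + 1) * (1 - p) ^ (2 * m + 1) *
          (2 * s + 1 + 1) ^ (2 * (k + m) + 2)) * (2 * s * Real.exp 1) := by ring
    _ ≤ ((k + m).choose k : ℝ) ^ 2 * ((2 * k + 1) ^ (2 * k + 1) * (2 * m + 1) ^ (2 * m + 1)) *
          (2 * s * Real.exp 1) := by gcongr
    _ ≤ (2 * s + 1) ^ (2 * (k + m) + 1) * (2 * s * Real.exp 1) := by gcongr
    _ < (2 * s + 1) ^ (2 * (k + m) + 1) * ((2 * s + 1) * Real.exp 1) := by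
      gcongr
      exact lt_add_one _
    _ = (2 * s + 1) ^ (2 * (k + m) + 2) * Real.exp 1 := by ring
    _ ≤ (2 * s + 1 + 1) ^ (2 * (k + m) + 2) := hexp
    _ = 1 * (2 * s + 1 + 1) ^ (2 * (k + m) + 2) := (one_mul _).symm

end BinomialMass

section CharacteristicFunction

/-- The remainder of the exponential series after its first `n` terms. -/
noncomputable def expRemainder (n : ℕ) (z : ℂ) : ℂ :=
  Complex.exp z - ∑ m ∈ range n, z ^ m / m !

lemma hasDerivAt_expRemainder_smul (n : ℕ) (z : ℂ) (t : ℝ) :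
    HasDerivAt (fun s : ℝ ↦ expRemainder (n + 1) (s * z)) (expRemainder n (t * z) * z) t := by
  have hlin : HasDerivAt (fun s : ℝ ↦ (s : ℂ) * z) z t := by
    simpa using (Complex.ofRealCLM.hasDerivAt (x := t)).mul_const z
  have hsum : HasDerivAt (fun w : ℂ ↦ ∑ m ∈ range (n + 1), w ^ m / m !)
      (∑ m ∈ range n, (t * z) ^ m / m !) (t * z) := by
    simp only [sum_range_succ' _ n, pow_zero]
    refine (HasDerivAt.fun_sum fun m _ ↦ ?_).add_const _
    convert! (hasDerivAt_pow (m + 1) (t * z)).div_const ((m + 1)! : ℂ) using 1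
    push_cast [Nat.factorial_succ, Nat.add_sub_cancel]
    field_simp
  exact ((Complex.hasDerivAt_exp (t * z)).sub hsum).comp t hlin

lemma norm_expRemainder_le {z : ℂ} (hz : z.re ≤ 0) (n : ℕ) :
    ‖expRemainder n z‖ ≤ ‖z‖ ^ n / n ! := by
  induction n generalizing z with
  | zero => simpa [expRemainder, Complex.norm_exp] using hz
  | succ n ih =>
    have hderiv := hasDerivAt_expRemainder_smul n z
    have hzero : expRemainder (n + 1) 0 = 0 := by
      simp [expRemainder, sum_range_succ']
    have hbound : ∀ t : ℝ, HasDerivAt (fun s : ℝ ↦ (s * ‖z‖) ^ (n + 1) / (n + 1)!)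
        ((t * ‖z‖) ^ n / n ! * ‖z‖) t := by
      intro t
      convert! (((hasDerivAt_id t).mul_const ‖z‖).pow (n + 1)).div_const ((n + 1)! : ℝ) using 1
      push_cast [Nat.factorial_succ, Nat.add_sub_cancel, id]
      field_simp
    have h := image_norm_le_of_norm_deriv_right_le_deriv_boundary (a := 0) (b := 1)
      (fun t _ ↦ (hderiv t).continuousAt.continuousWithinAt)
      (fun t _ ↦ (hderiv t).hasDerivWithinAt)
      (by simp [hzero]) hbound (fun t ht ↦ ?_) (Set.right_mem_Icc.2 zero_le_one)
    · simpa using h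
    · have hre : ((t : ℂ) * z).re ≤ 0 := by
        simpa using mul_nonpos_of_nonneg_of_nonpos ht.1 hz
      have hnorm : ‖(t : ℂ) * z‖ = t * ‖z‖ := by
        rw [norm_mul, Complex.norm_real, Real.norm_of_nonneg ht.1]
      rw [norm_mul, ← hnorm]
      gcongr
      exact ih hre

/-- The characteristic function of a centred Bernoulli variable with parameter `p`. -/
noncomputable def bernoulliChar (p t : ℝ) : ℂ :=
  (1 - p : ℝ) * Complex.exp ((-(p * t) : ℝ) * I) + p * Complex.exp (((1 - p) * t : ℝ) * I)

@[fun_prop]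
lemma continuous_bernoulliChar (p : ℝ) : Continuous (bernoulliChar p) := by
  unfold bernoulliChar
  fun_prop

lemma bernoulliChar_eq_exp_mul (p t : ℝ) :
    bernoulliChar p t = Complex.exp ((-(p * t) : ℝ) * I) *
      (p * Complex.exp (t * I) + (1 - p : ℝ)) := by
  have h : Complex.exp (((1 - p) * t : ℝ) * I) =
      Complex.exp ((-(p * t) : ℝ) * I) * Complex.exp (t * I) := by
    rw [← Complex.exp_add]
    push_cast
    ring_nf
  rw [bernoulliChar, h]
  ring

lemma norm_bernoulliChar_sq (p t : ℝ) :
    ‖bernoulliChar p t‖ ^ 2 = 1 - 2 * (p * (1 - p)) * (1 - Real.cos t) := by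
  rw [bernoulliChar_eq_exp_mul, norm_mul, Complex.norm_exp_ofReal_mul_I, one_mul, Complex.sq_norm,
    Complex.normSq_apply]
  simp only [Complex.add_re, Complex.add_im, Complex.mul_re, Complex.mul_im, Complex.ofReal_re,
    Complex.ofReal_im, Complex.exp_ofReal_mul_I_re, Complex.exp_ofReal_mul_I_im]
  linear_combination p ^ 2 * Real.sin_sq_add_cos_sq t

lemma sq_div_five_le_one_sub_cos {t : ℝ} (ht : |t| ≤ π) : t ^ 2 / 5 ≤ 1 - Real.cos t := by
  have hpi : 1 / 5 ≤ 2 / π ^ 2 := by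
    rw [div_le_div_iff₀ (by norm_num) (by positivity)]
    nlinarith [Real.pi_lt_d2, Real.pi_pos]
  linarith [Real.cos_le_one_sub_mul_cos_sq ht, mul_le_mul_of_nonneg_right hpi (sq_nonneg t)]

lemma norm_bernoulliChar_le_exp_cos (p t : ℝ) :
    ‖bernoulliChar p t‖ ≤ Real.exp (-(p * (1 - p) * (1 - Real.cos t))) := by
  refine le_of_sq_le_sq ?_ (Real.exp_pos _).le
  rw [norm_bernoulliChar_sq, ← Real.exp_nat_mul]
  refine le_trans (le_of_eq ?_) (Real.add_one_le_exp _)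
  push_cast
  ring

section

variable {p t : ℝ} (hp0 : 0 ≤ p) (hp1 : p ≤ 1)
include hp0 hp1

lemma norm_bernoulliChar_le (ht : |t| ≤ π) :
    ‖bernoulliChar p t‖ ≤ Real.exp (-(p * (1 - p) / 5) * t ^ 2) := by
  refine (norm_bernoulliChar_le_exp_cos p t).trans (Real.exp_le_exp.2 ?_)
  have hu : 0 ≤ p * (1 - p) := mul_nonneg hp0 (sub_nonneg.2 hp1)
  linarith [mul_le_mul_of_nonneg_left (sq_div_five_le_one_sub_cos ht) hu]

lemma norm_bernoulliChar_sub_exp_le :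
    ‖bernoulliChar p t - Real.exp (-(p * (1 - p) / 2) * t ^ 2)‖ ≤
      p * (1 - p) * |t| ^ 3 * ((1 - 2 * (p * (1 - p))) / 6 + p * (1 - p) * |t| / 8) := by
  have hq0 : 0 ≤ 1 - p := sub_nonneg.2 hp1
  have := mul_nonneg hp0 hq0
  have hzero := norm_expRemainder_le (z := (-(p * t) : ℝ) * I) (by simp) 3
  have hone := norm_expRemainder_le (z := ((1 - p) * t : ℝ) * I) (by simp) 3
  have hgauss := norm_expRemainder_le (z := (-(p * (1 - p) / 2) * t ^ 2 : ℝ))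
    (by rw [Complex.ofReal_re, neg_mul, neg_nonpos]; positivity) 2
  rw [norm_mul, Complex.norm_I, mul_one, Complex.norm_real, Real.norm_eq_abs, abs_neg, abs_mul,
    abs_of_nonneg hp0] at hzero
  rw [norm_mul, Complex.norm_I, mul_one, Complex.norm_real, Real.norm_eq_abs, abs_mul,
    abs_of_nonneg hq0] at hone
  rw [Complex.norm_real, Real.norm_eq_abs, abs_mul, abs_neg, abs_of_nonneg (by positivity),
    abs_pow] at hgauss
  -- The Taylor polynomials cancel because both laws are centred with the same variance.
  have hcancel : bernoulliChar p t - Real.exp (-(p * (1 - p) / 2) * t ^ 2) =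
      (1 - p : ℝ) * expRemainder 3 ((-(p * t) : ℝ) * I) +
        p * expRemainder 3 (((1 - p) * t : ℝ) * I) -
        expRemainder 2 (-(p * (1 - p) / 2) * t ^ 2 : ℝ) := by
    simp only [bernoulliChar, expRemainder, sum_range_succ, sum_range_zero, Complex.ofReal_exp,
      Nat.factorial]
    push_cast
    linear_combination (p : ℂ) * (1 - p) * t ^ 2 / 2 * Complex.I_sq
  calc ‖bernoulliChar p t - Real.exp (-(p * (1 - p) / 2) * t ^ 2)‖
      ≤ (1 - p) * ‖expRemainder 3 ((-(p * t) : ℝ) * I)‖ +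
          p * ‖expRemainder 3 (((1 - p) * t : ℝ) * I)‖ +
          ‖expRemainder 2 (-(p * (1 - p) / 2) * t ^ 2 : ℝ)‖ := by
        rw [hcancel]
        refine (norm_sub_le _ _).trans (add_le_add_left ((norm_add_le _ _).trans_eq ?_) _)
        rw [norm_mul, norm_mul, Complex.norm_real, Complex.norm_real, Real.norm_of_nonneg hq0,
          Real.norm_of_nonneg hp0]
    _ ≤ (1 - p) * ((p * |t|) ^ 3 / 3 !) + p * (((1 - p) * |t|) ^ 3 / 3 !) +
          (p * (1 - p) / 2 * |t| ^ 2) ^ 2 / 2 ! := by gcongr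
    _ = _ := by
      simp only [Nat.factorial]
      push_cast
      ring

lemma norm_bernoulliChar_sub_exp_le_of_abs_le_pi (ht : |t| ≤ π) :
    ‖bernoulliChar p t - Real.exp (-(p * (1 - p) / 2) * t ^ 2)‖ ≤
      0.182 * (p * (1 - p)) * |t| ^ 3 := by
  have hu : 0 ≤ p * (1 - p) := mul_nonneg hp0 (sub_nonneg.2 hp1)
  have hu4 : p * (1 - p) ≤ 1 / 4 := by linarith [sq_nonneg (p - 1 / 2)]
  have hconst : (1 - 2 * (p * (1 - p))) / 6 + p * (1 - p) * |t| / 8 ≤ 0.182 := by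
    linarith [mul_le_mul_of_nonneg_left (ht.trans Real.pi_lt_d4.le) hu]
  calc _ ≤ p * (1 - p) * |t| ^ 3 * 0.182 := by
        grw [norm_bernoulliChar_sub_exp_le hp0 hp1, hconst]
    _ = _ := by ring

end

lemma norm_pow_sub_pow_le {R : Type*} [SeminormedRing R] [NormOneClass R] {x y : R}
    (hxy : Commute x y) {a b : ℝ} (hx : ‖x‖ ≤ a) (hy : ‖y‖ ≤ b) (n : ℕ) :
    ‖x ^ n - y ^ n‖ ≤ ‖x - y‖ * ∑ j ∈ range n, a ^ j * b ^ (n - 1 - j) := by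
  rw [← hxy.mul_geom_sum₂ n]
  grw [norm_mul_le, norm_sum_le]
  have ha := (norm_nonneg x).trans hx
  gcongr with j
  grw [norm_mul_le, norm_pow_le, norm_pow_le, hx, hy]

end CharacteristicFunction

section GaussianIntegrals

/-- The function `|t|³ e^{-b t²}`, the shape of every error term in the Fourier integrals. -/
noncomputable def cubicGaussian (b t : ℝ) : ℝ :=
  |t| ^ 3 * Real.exp (-b * t ^ 2)

lemma cubicGaussian_nonneg (b t : ℝ) : 0 ≤ cubicGaussian b t := by
  unfold cubicGaussian
  positivity

lemma integrable_cubicGaussian {b : ℝ} (hb : 0 < b) : Integrable (cubicGaussian b) := by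
  refine (integrable_rpow_mul_exp_neg_mul_sq hb (s := (3 : ℕ)) (by norm_num)).norm.congr
    (.of_forall fun t ↦ ?_)
  simp only [Real.rpow_natCast, norm_mul, norm_pow, Real.norm_eq_abs, Real.abs_exp, cubicGaussian]

lemma integral_cubicGaussian {b : ℝ} (hb : 0 < b) : ∫ t, cubicGaussian b t = 1 / b ^ 2 := by
  have habs := integral_comp_abs (f := fun t : ℝ ↦ t ^ 3 * Real.exp (-b * t ^ 2))
  have hmoment := integral_rpow_mul_exp_neg_mul_rpow (p := (2 : ℕ)) (q := (3 : ℕ)) (b := b)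
    (by norm_num) (by norm_num) hb
  simp only [Real.rpow_natCast] at hmoment
  simp only [sq_abs] at habs
  simp only [cubicGaussian]
  rw [habs, hmoment, show (-((3 : ℕ) + 1) / (2 : ℕ) : ℝ) = -(2 : ℕ) by norm_num,
    show (((3 : ℕ) + 1) / (2 : ℕ) : ℝ) = 2 by norm_num,
    Real.Gamma_two, Real.rpow_neg hb.le, Real.rpow_natCast]
  field_simp
  norm_num

/-- The density at `x` of the centred normal distribution with variance `v`. -/
noncomputable def gaussianDensity (v x : ℝ) : ℝ :=
  1 / √v * phi (x / √v)

lemma gaussianDensity_nonneg (v x : ℝ) : 0 ≤ gaussianDensity v x := by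
  unfold gaussianDensity phi
  positivity

lemma phi_le (x : ℝ) : phi x ≤ (√(2 * π))⁻¹ := by
  refine mul_le_of_le_one_right (by positivity) (Real.exp_le_one_iff.2 ?_)
  linarith [sq_nonneg x]

lemma gaussianDensity_lt {v : ℝ} (hv : 0 < v) (x : ℝ) :
    gaussianDensity v x < 1 / (√v * √(2 * Real.exp 1)) := by
  rw [gaussianDensity, ← one_div_mul_one_div]
  gcongr
  refine (phi_le _).trans_lt ?_
  rw [← one_div]
  gcongr
  linarith [Real.exp_one_lt_d9, Real.pi_gt_d2]

lemma gaussianDensity_eq {v : ℝ} (hv : 0 < v) (x : ℝ) :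
    gaussianDensity v x = (√(2 * π * v))⁻¹ * Real.exp (-x ^ 2 / (2 * v)) := by
  rw [gaussianDensity, phi, div_pow, Real.sq_sqrt hv.le, Real.sqrt_mul (x := 2 * π) (by positivity),
    show -(x ^ 2 / v) / 2 = -x ^ 2 / (2 * v) by field_simp]
  field_simp

lemma integral_exp_mul_I_mul_gaussian {v : ℝ} (hv : 0 < v) (x : ℝ) :
    ∫ t : ℝ, Complex.exp ((-(x * t) : ℝ) * I) * Real.exp (-(v / 2) * t ^ 2) =
      (2 * π * gaussianDensity v x : ℝ) := by
  have h := fourierIntegral_gaussian (b := (v / 2 : ℝ)) (by simpa using hv) (-x : ℂ)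
  have hsqrt : √(π / (v / 2)) = 2 * π * (√(2 * π * v))⁻¹ := by
    rw [show π / (v / 2) = (2 * π) ^ 2 / (2 * π * v) by field_simp,
      Real.sqrt_div (by positivity), Real.sqrt_sq (by positivity), div_eq_mul_inv]
  rw [gaussianDensity_eq hv, ← mul_assoc, ← hsqrt, Real.sqrt_eq_rpow]
  push_cast [Complex.ofReal_cpow (show 0 ≤ π / (v / 2) by positivity)]
  push_cast at h
  convert! h using 3
  all_goals ring_nf

end GaussianIntegrals

section FourierInversion

lemma integral_exp_int_mul_I (m : ℤ) :
    ∫ t in -π..π, Complex.exp (m * I * t) = if m = 0 then (2 * π : ℂ) else 0 := by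
  split_ifs with hm
  · simp only [hm, Int.cast_zero, zero_mul, Complex.exp_zero, intervalIntegral.integral_const,
      sub_neg_eq_add, Complex.real_smul, mul_one]
    push_cast
    ring
  · have hmI : (m : ℂ) * I ≠ 0 := mul_ne_zero (Int.cast_ne_zero.2 hm) Complex.I_ne_zero
    rw [integral_exp_mul_complex hmI, div_eq_zero_iff, sub_eq_zero,
      Complex.exp_eq_exp_iff_exists_int]
    refine .inl ⟨m, ?_⟩
    push_cast
    ring

lemma integral_exp_mul_eval_exp (P : ℂ[X]) (k : ℕ) :
    ∫ t in -π..π, Complex.exp ((-(k * t) : ℝ) * I) * P.eval (Complex.exp (t * I)) =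
      2 * π * P.coeff k := by
  induction P using Polynomial.induction_on' with
  | add P Q hP hQ =>
    simp only [Polynomial.eval_add, mul_add, Polynomial.coeff_add, ← hP, ← hQ]
    exact intervalIntegral.integral_add (Continuous.intervalIntegrable (by fun_prop) _ _)
      (Continuous.intervalIntegrable (by fun_prop) _ _)
  | monomial j c =>
    have hexp : ∀ t : ℝ, Complex.exp ((-(k * t) : ℝ) * I) *
        (Polynomial.monomial j c).eval (Complex.exp (t * I)) =
        c * Complex.exp ((j - k : ℤ) * I * t) := by
      intro t
      rw [Polynomial.eval_monomial, mul_left_comm, ← Complex.exp_nat_mul, ← Complex.exp_add]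
      push_cast
      ring_nf
    simp only [hexp, intervalIntegral.integral_const_mul, integral_exp_int_mul_I, sub_eq_zero,
      Nat.cast_inj, Polynomial.coeff_monomial]
    split_ifs <;> ring

lemma coeff_C_mul_X_add_C_pow {R : Type*} [CommSemiring R] (a b : R) (n k : ℕ) :
    ((Polynomial.C a * Polynomial.X + Polynomial.C b) ^ n).coeff k =
      n.choose k * a ^ k * b ^ (n - k) := by
  have hcomp : (Polynomial.C a * Polynomial.X + Polynomial.C b) ^ n =
      ((Polynomial.X + Polynomial.C b) ^ n).comp (Polynomial.C a * Polynomial.X) := by simp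
  rw [hcomp, Polynomial.comp_C_mul_X_coeff, Polynomial.coeff_X_add_C_pow]
  ring

lemma integral_exp_mul_I_mul_bernoulliChar_pow (p : ℝ) (n k : ℕ) :
    ∫ t in -π..π, Complex.exp ((-((k - n * p) * t) : ℝ) * I) * bernoulliChar p t ^ n =
      (2 * π * binomialMass p n k : ℝ) := by
  have hpoly : ∀ t : ℝ, Complex.exp ((-((k - n * p) * t) : ℝ) * I) * bernoulliChar p t ^ n =
      Complex.exp ((-(k * t) : ℝ) * I) *
        ((Polynomial.C (p : ℂ) * Polynomial.X + Polynomial.C ((1 - p : ℝ) : ℂ)) ^ n).eval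
          (Complex.exp (t * I)) := by
    intro t
    rw [bernoulliChar_eq_exp_mul, mul_pow, ← Complex.exp_nat_mul, ← mul_assoc, ← Complex.exp_add]
    simp only [Polynomial.eval_pow, Polynomial.eval_add, Polynomial.eval_mul, Polynomial.eval_C,
      Polynomial.eval_X]
    congr 2
    push_cast
    ring
  simp only [hpoly, integral_exp_mul_eval_exp, coeff_C_mul_X_add_C_pow, binomialMass]
  push_cast
  ring

lemma norm_setIntegral_sub_integral_le {α E : Type*} [MeasurableSpace α] [NormedAddCommGroup E]
    [NormedSpace ℝ E] {μ : Measure α} {s : Set α} {f g : α → E} {B : α → ℝ}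
    (hs : MeasurableSet s) (hf : IntegrableOn f s μ) (hg : Integrable g μ) (hB : Integrable B μ)
    (hsB : ∀ x ∈ s, ‖f x - g x‖ ≤ B x) (hscB : ∀ x ∉ s, ‖g x‖ ≤ B x) :
    ‖∫ x in s, f x ∂μ - ∫ x, g x ∂μ‖ ≤ ∫ x, B x ∂μ := by
  rw [← integral_indicator hs, ← integral_sub ((integrable_indicator_iff hs).2 hf) hg]
  refine norm_integral_le_of_norm_le hB (.of_forall fun x ↦ ?_)
  by_cases hx : x ∈ s
  · simpa only [Set.indicator_of_mem hx] using hsB x hx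
  · simpa only [Set.indicator_of_notMem hx, zero_sub, norm_neg] using hscB x hx

end FourierInversion

section LocalLimit

/-- The error `δ_n(k, p)` of the local Moivre–Laplace approximation. -/
noncomputable def localError (p : ℝ) (n k : ℕ) : ℝ :=
  binomialMass p n k - gaussianDensity (n * p * (1 - p)) (k - n * p)

/-- The exponent `b` in the bound `e^{-b t²}`, valid on `[-π, π]`, for the product of `j` Gaussian
factors `e^{-p q t² / 2}` and `n - 1 - j` Bernoulli characteristic functions. -/
noncomputable def decayRate (p : ℝ) (n j : ℕ) : ℝ :=
  p * (1 - p) / 5 * (n - 1 + 3 / 2 * j)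

/-- An integrable bound for the difference of the Fourier integrands of the binomial mass, extended
by zero outside `[-π, π]`, and of the Gaussian density. The first sum serves on `[-π, π]`, the last
term elsewhere. -/
noncomputable def fourierMajorant (p : ℝ) (n : ℕ) (t : ℝ) : ℝ :=
  0.182 * (p * (1 - p)) * ∑ j ∈ range n, cubicGaussian (decayRate p n j) t +
    1 / 30 * cubicGaussian (n * p * (1 - p) / 2) t

lemma decayRate_pos {p : ℝ} (hp0 : 0 < p) (hp1 : p < 1) {n : ℕ} (hn : 2 ≤ n) (j : ℕ) :
    0 < decayRate p n j := by
  have := sub_pos.2 hp1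
  have hn' : (0 : ℝ) < n - 1 := sub_pos.2 (by exact_mod_cast hn)
  unfold decayRate
  positivity

lemma sum_one_div_sq_le {c d : ℝ} (hc : 0 < c) (hd : 0 ≤ d) (n : ℕ) :
    ∑ j ∈ range n, 1 / (c + d * (j + 1 / 2)) ^ 2 ≤ n / (c * (c + d * n)) := by
  induction n with
  | zero => simp
  | succ n ih =>
    calc ∑ j ∈ range (n + 1), 1 / (c + d * (j + 1 / 2)) ^ 2
        ≤ n / (c * (c + d * n)) + 1 / (c + d * (n + 1 / 2)) ^ 2 := by
          rw [sum_range_succ]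
          gcongr
      _ ≤ n / (c * (c + d * n)) + 1 / ((c + d * n) * (c + d * (n + 1))) := by
          gcongr
          linarith [sq_nonneg d]
      _ = (n + 1 : ℕ) / (c * (c + d * (n + 1 : ℕ))) := by
          push_cast
          field_simp
          ring

lemma norm_bernoulliChar_pow_sub_exp_le {p t : ℝ} (hp0 : 0 ≤ p) (hp1 : p ≤ 1) (ht : |t| ≤ π)
    (n : ℕ) :
    ‖bernoulliChar p t ^ n - Real.exp (-(n * p * (1 - p) / 2) * t ^ 2)‖ ≤
      0.182 * (p * (1 - p)) * ∑ j ∈ range n, cubicGaussian (decayRate p n j) t := by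
  have hpow : (Real.exp (-(n * p * (1 - p) / 2) * t ^ 2) : ℂ) =
      (Real.exp (-(p * (1 - p) / 2) * t ^ 2) : ℂ) ^ n := by
    rw [← Complex.ofReal_pow, ← Real.exp_nat_mul]
    ring_nf
  have hrate : ∀ j ∈ range n, Real.exp (-(p * (1 - p) / 2) * t ^ 2) ^ j *
      Real.exp (-(p * (1 - p) / 5) * t ^ 2) ^ (n - 1 - j) =
      Real.exp (-decayRate p n j * t ^ 2) := by
    intro j hj
    have hcast : ((n - 1 - j : ℕ) : ℝ) = n - 1 - j := by
      rw [mem_range] at hj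
      rw [Nat.sub_sub, Nat.cast_sub (by lia)]
      push_cast
      ring
    rw [← Real.exp_nat_mul, ← Real.exp_nat_mul, ← Real.exp_add, decayRate, hcast]
    ring_nf
  have htelescope := norm_pow_sub_pow_le (Commute.all (Real.exp (-(p * (1 - p) / 2) * t ^ 2) : ℂ)
    (bernoulliChar p t)) (Complex.norm_of_nonneg (Real.exp_pos _).le).le
    (norm_bernoulliChar_le hp0 hp1 ht) n
  rw [hpow, norm_sub_rev]
  calc _ ≤ _ := htelescope
    _ ≤ 0.182 * (p * (1 - p)) * |t| ^ 3 *
        ∑ j ∈ range n, Real.exp (-decayRate p n j * t ^ 2) := by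
      rw [sum_congr rfl hrate, norm_sub_rev]
      gcongr
      exact norm_bernoulliChar_sub_exp_le_of_abs_le_pi hp0 hp1 ht
    _ = _ := by rw [mul_assoc, mul_sum]; rfl

lemma exp_neg_mul_sq_le_cubicGaussian (b : ℝ) {t : ℝ} (ht : π ≤ |t|) :
    Real.exp (-b * t ^ 2) ≤ 1 / 30 * cubicGaussian b t := by
  have hcube : 30 ≤ |t| ^ 3 := by
    grw [← ht, ← Real.pi_gt_d2]
    norm_num
  have h := mul_le_mul_of_nonneg_right hcube (Real.exp_pos (-b * t ^ 2)).le
  rw [cubicGaussian]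
  linarith

section

variable {p : ℝ} (hp0 : 0 < p) (hp1 : p < 1) {n : ℕ} (hn : 2 ≤ n)
include hp0 hp1 hn

lemma integrable_fourierMajorant : Integrable (fourierMajorant p n) := by
  have := sub_pos.2 hp1
  exact ((integrable_finsetSum _ fun j _ ↦
    integrable_cubicGaussian (decayRate_pos hp0 hp1 hn j)).const_mul _).add
    ((integrable_cubicGaussian (by positivity)).const_mul _)

lemma integral_fourierMajorant :
    ∫ t, fourierMajorant p n t =
      4.55 / (p * (1 - p)) * ∑ j ∈ range n, 1 / ((n : ℝ) - 1 + 3 / 2 * j) ^ 2 +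
        2 / 15 / (n * p * (1 - p)) ^ 2 := by
  have := sub_pos.2 hp1
  have hv : 0 < n * p * (1 - p) / 2 := by positivity
  have hrates : ∀ j ∈ range n, Integrable (cubicGaussian (decayRate p n j)) :=
    fun j _ ↦ integrable_cubicGaussian (decayRate_pos hp0 hp1 hn j)
  simp only [fourierMajorant]
  rw [integral_add ((integrable_finsetSum _ hrates).const_mul _)
    ((integrable_cubicGaussian hv).const_mul _), integral_const_mul, integral_const_mul,
    integral_finsetSum _ hrates, integral_cubicGaussian hv]
  simp only [integral_cubicGaussian (decayRate_pos hp0 hp1 hn _)]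
  simp only [decayRate, mul_pow, one_div, mul_inv, ← mul_sum]
  field_simp
  ring

lemma two_pi_mul_abs_localError_le_integral (k : ℕ) :
    2 * π * |localError p n k| ≤ ∫ t, fourierMajorant p n t := by
  have := sub_pos.2 hp1
  set v := n * p * (1 - p)
  have hv : 0 < v := by positivity
  have hgauss : Integrable fun t : ℝ ↦
      Complex.exp ((-((k - n * p) * t) : ℝ) * I) * Real.exp (-(v / 2) * t ^ 2) :=
    (integrable_exp_neg_mul_sq (half_pos hv)).ofReal.bdd_mul (c := 1)
      (Continuous.aestronglyMeasurable (by fun_prop))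
      (.of_forall fun t ↦ (Complex.norm_exp_ofReal_mul_I _).le)
  have hcompare := norm_setIntegral_sub_integral_le (measurableSet_Ioc (a := -π) (b := π))
    (f := fun t ↦ Complex.exp ((-((k - n * p) * t) : ℝ) * I) * bernoulliChar p t ^ n)
    (Continuous.integrableOn_Ioc (by fun_prop)) hgauss (integrable_fourierMajorant hp0 hp1 hn)
    (fun t ht ↦ ?_) fun t ht ↦ ?_
  · rwa [← intervalIntegral.integral_of_le (by linarith [Real.pi_pos]),
      integral_exp_mul_I_mul_bernoulliChar_pow, integral_exp_mul_I_mul_gaussian hv,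
      ← Complex.ofReal_sub, Complex.norm_real, ← mul_sub, norm_mul,
      Real.norm_of_nonneg Real.two_pi_pos.le, Real.norm_eq_abs] at hcompare
  · rw [← mul_sub, norm_mul, Complex.norm_exp_ofReal_mul_I, one_mul]
    exact (norm_bernoulliChar_pow_sub_exp_le hp0.le hp1.le (abs_le.2 ⟨ht.1.le, ht.2⟩) n).trans
      (le_add_of_nonneg_right (mul_nonneg (by norm_num) (cubicGaussian_nonneg _ _)))
  · have ht' : π ≤ |t| := by
      by_contra! hlt
      exact ht ⟨(abs_lt.1 hlt).1, (abs_lt.1 hlt).2.le⟩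
    rw [norm_mul, Complex.norm_exp_ofReal_mul_I, one_mul,
      Complex.norm_of_nonneg (Real.exp_pos _).le]
    exact (exp_neg_mul_sq_le_cubicGaussian _ ht').trans (le_add_of_nonneg_left
      (mul_nonneg (by positivity) (sum_nonneg fun j _ ↦ cubicGaussian_nonneg _ _)))

end

lemma two_pi_mul_abs_localError_le {p : ℝ} (hp0 : 0 < p) (hp1 : p < 1) {n : ℕ} (hn : 6 ≤ n)
    (k : ℕ) :
    2 * π * |localError p n k| ≤ 3 / (n * p * (1 - p)) + 2 / 15 / (n * p * (1 - p)) ^ 2 := by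
  have := sub_pos.2 hp1
  have hn' : (6 : ℝ) ≤ n := by exact_mod_cast hn
  have hsum : ∑ j ∈ range n, 1 / ((n : ℝ) - 1 + 3 / 2 * j) ^ 2 ≤ (3 / (4.55 * n) : ℝ) :=
    calc ∑ j ∈ range n, 1 / ((n : ℝ) - 1 + 3 / 2 * j) ^ 2
        = ∑ j ∈ range n, 1 / ((n : ℝ) - 7 / 4 + 3 / 2 * (j + 1 / 2)) ^ 2 := by ring_nf
      _ ≤ (n : ℝ) / ((n - 7 / 4) * (n - 7 / 4 + 3 / 2 * n)) :=
        sum_one_div_sq_le (by linarith) (by norm_num) n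
      _ ≤ 3 / (4.55 * n) := by
        have hpos : (0 : ℝ) < n - 7 / 4 := by linarith
        rw [div_le_div_iff₀ (by positivity) (by positivity)]
        nlinarith
  refine (two_pi_mul_abs_localError_le_integral hp0 hp1 (by lia) k).trans ?_
  rw [integral_fourierMajorant hp0 hp1 (by lia)]
  grw [hsum]
  refine le_of_eq ?_
  field_simp

lemma one_div_sqrt_mul_sqrt_le_div {v : ℝ} (hv : 0 < v) (hv' : v ≤ 1.44) :
    1 / (√v * √(2 * Real.exp 1)) ≤ 0.516 / v := by
  have hsqrt : v ≤ √(0.516 ^ 2 * (v * (2 * Real.exp 1))) := by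
    refine Real.le_sqrt_of_sq_le ?_
    nlinarith [Real.exp_one_gt_d9]
  rwa [← Real.sqrt_mul hv.le, div_le_div_iff₀ (by positivity) hv, one_mul,
    ← Real.sqrt_sq (show (0 : ℝ) ≤ 0.516 by norm_num), ← Real.sqrt_mul (by positivity)]

lemma six_le_of_le_mul_mul_one_sub {p : ℝ} {n : ℕ} (h : 1.44 ≤ n * p * (1 - p)) : 6 ≤ n := by
  by_contra! hlt
  have hn : (n : ℝ) ≤ 5 := by exact_mod_cast Nat.le_of_lt_succ hlt
  have hu : p * (1 - p) ≤ 1 / 4 := by linarith [sq_nonneg (p - 1 / 2)]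
  linarith [mul_le_mul_of_nonneg_left hu (Nat.cast_nonneg (α := ℝ) n)]

variable {p : ℝ} (hp0 : 0 < p) (hp1 : p < 1) {n k : ℕ} (hn : 1 ≤ n) (hk : k ≤ n)
include hp0 hp1 hn hk

lemma binomialMass_lt : binomialMass p n k < 1 / (√(n * p * (1 - p)) * √(2 * Real.exp 1)) := by
  have := sub_pos.2 hp1
  have hv : 0 < n * p * (1 - p) := by positivity
  obtain ⟨m, rfl⟩ := Nat.exists_eq_add_of_le hk
  rw [← Real.sqrt_mul hv.le, one_div, ← Real.sqrt_inv]
  refine Real.lt_sqrt_of_sq_lt ?_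
  rw [mul_inv_rev, ← div_eq_mul_inv, lt_div_iff₀ hv, ← one_div]
  exact binomialMass_sq_mul_lt hp0.le hp1.le k m

lemma abs_localError_lt_one_div_sqrt :
    |localError p n k| < 1 / (√(n * p * (1 - p)) * √(2 * Real.exp 1)) := by
  have := sub_pos.2 hp1
  exact abs_sub_lt_of_nonneg_of_lt (binomialMass_nonneg hp0.le hp1.le n k)
    (binomialMass_lt hp0 hp1 hn hk) (gaussianDensity_nonneg _ _)
    (gaussianDensity_lt (by positivity) _)

lemma abs_localError_lt_div : |localError p n k| < 0.516 / (n * p * (1 - p)) := by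
  have := sub_pos.2 hp1
  have hv : 0 < n * p * (1 - p) := by positivity
  rcases le_total (n * p * (1 - p)) 1.44 with hsmall | hlarge
  · exact (abs_localError_lt_one_div_sqrt hp0 hp1 hn hk).trans_le
      (one_div_sqrt_mul_sqrt_le_div hv hsmall)
  · have hfourier :=
      two_pi_mul_abs_localError_le hp0 hp1 (six_le_of_le_mul_mul_one_sub hlarge) k
    set v := n * p * (1 - p)
    refine lt_of_mul_lt_mul_left ?_ Real.two_pi_pos.le
    calc 2 * π * |localError p n k| ≤ 3 / v + 2 / 15 / v ^ 2 := hfourier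
      _ = (3 + 2 / 15 / v) / v := by field_simp
      _ ≤ (3 + 2 / 15 / 1.44) / v := by gcongr
      _ < 2 * 3.14 * 0.516 / v := by
        gcongr
        norm_num
      _ ≤ 2 * π * 0.516 / v := by
        gcongr
        exact Real.pi_gt_d2.le
      _ = 2 * π * (0.516 / v) := mul_div_assoc _ _ _

end LocalLimit

/-- Local Moivre–Laplace bound: for `0 < p < 1`, `q = 1 − p`, `n ≥ 1`,
`0 ≤ k ≤ n`, `σ = √(npq)`, the quantity
`δ_n(k,p) = C(n,k) p^k q^{n−k} − (1/σ) φ((k − np)/σ)` satisfies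
`|δ_n(k,p)| < min{ 1/(σ√(2e)), 0.516/σ² }`. -/
theorem local_moivre_laplace_bound (p : ℝ) (hp : p ∈ Set.Ioo (0 : ℝ) 1)
    (n k : ℕ) (hn : 1 ≤ n) (hk : k ≤ n) :
    |(n.choose k : ℝ) * p ^ k * (1 - p) ^ (n - k) -
        (1 / Real.sqrt (n * p * (1 - p))) *
          phi (((k : ℝ) - n * p) / Real.sqrt (n * p * (1 - p)))| <
      min (1 / (Real.sqrt (n * p * (1 - p)) * Real.sqrt (2 * Real.exp 1)))
        (0.516 / (n * p * (1 - p))) :=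
  lt_min (abs_localError_lt_one_div_sqrt hp.1 hp.2 hn hk)
    (abs_localError_lt_div hp.1 hp.2 hn hk)
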